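/- Let n ≥ 2 and let f ∈ ℚ[x₁,…,xₙ] be a polynomial that is irreducible over ℚ. Suppose there exists a proper Zariski closed subset W ⊊ ℂ^{n−1} such that for every rational point ρ ∈ ℚ^{n−1} with ρ ∉ W there exists t ∈ ℚ with f(ρ, t) = 0. Then the degree of f in the variable xₙ is at most 1. -/

import Mathlib

open MvPolynomial

noncomputable section

/-- A subset of `ℂ^m` is Zariski closed if it is the common zero locus of a family
of polynomials in `m` variables with complex coefficients. -/
def ZClosed (m : ℕ) (S : Set (Fin m → ℂ)) : Prop :=
  ∃ P : Set (MvPolynomial (Fin m) ℂ), S = {z | ∀ p ∈ P, eval z p = 0}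

namespace HIT

/-- Integer polynomial ring in `m` variables. -/
abbrev ZP (m : ℕ) := MvPolynomial (Fin m) ℤ

/-- Approximate roots of `F(x₀ + u, z)` by Newton iteration with a fixed slope. -/
def newton {m : ℕ} (F : Polynomial (ZP m)) (x₀ : Fin m → ℤ) (r v : ℤ) : ℕ → ZP m
  | 0 => C r
  | k + 1 => newton F x₀ r v k -
      C v * F.eval₂ (aeval (fun i => C (x₀ i) + X i) : ZP m →ₐ[ℤ] ZP m).toRingHom
        (newton F x₀ r v k)

lemma eval_newton_succ {m : ℕ} (F : Polynomial (ZP m)) (x₀ : Fin m → ℤ) (r v : ℤ) (k : ℕ)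
    (u : Fin m → ℤ) :
    eval u (newton F x₀ r v (k + 1)) = eval u (newton F x₀ r v k) -
      v * (F.map (eval (x₀ + u))).eval (eval u (newton F x₀ r v k)) := by
  have : (eval u).comp (aeval (fun i => C (x₀ i) + X i) : ZP m →ₐ[ℤ] ZP m).toRingHom
      = eval (x₀ + u) := by
    apply MvPolynomial.ringHom_ext <;> intros <;> simp
  rw [newton, map_sub, map_mul, eval_C, Polynomial.hom_eval₂, this, Polynomial.eval_map]

lemma red {m : ℕ} (p : ℕ) (G : Polynomial (ZP m)) (x₀ s : Fin m → ℤ) (z : ℤ) :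
    (((G.map (eval (x₀ + (p : ℤ) • s))).eval z : ℤ) : ZMod p) =
      (G.map ((Int.castRingHom (ZMod p)).comp (eval x₀))).eval (z : ZMod p) := by
  have : (Int.castRingHom (ZMod p)).comp (eval (x₀ + (p : ℤ) • s)) =
      (Int.castRingHom (ZMod p)).comp (eval x₀) := by
    apply MvPolynomial.ringHom_ext <;> intros <;> simp
  rw [← this, ← eq_intCast (Int.castRingHom (ZMod p)), Polynomial.eval_map, Polynomial.hom_eval₂,
    Polynomial.eval_map, eq_intCast]

lemma newton_approx {m : ℕ} (F : Polynomial (ZP m)) (x₀ : Fin m → ℤ) (r v p : ℤ)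
    (s : Fin m → ℤ) (z : ℤ) (hz : (F.map (eval (x₀ + p • s))).eval z = 0)
    (hr : p ∣ r - z)
    (hv : p ∣ 1 - v * (F.map (eval (x₀ + p • s))).derivative.eval z) (k : ℕ) :
    p ^ (k + 1) ∣ eval (p • s) (newton F x₀ r v k) - z := by
  induction k with
  | zero => simpa [newton] using hr
  | succ k ih =>
    rw [eval_newton_succ]
    generalize eval (p • s) (newton F x₀ r v k) = y at *
    generalize F.map (eval (x₀ + p • s)) = g at *
    obtain ⟨e, he⟩ := ih
    obtain ⟨c, hc⟩ := hv
    obtain ⟨q, hq⟩ := Polynomial.binomExpansion g z (y - z)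
    rw [add_sub_cancel, hz, zero_add] at hq
    rw [hq]
    refine ⟨e * c - v * q * e ^ 2 * p ^ k, ?_⟩
    have h1 : y - v * (g.derivative.eval z * (y - z) + q * (y - z) ^ 2) - z =
      (y - z) * (1 - v * g.derivative.eval z) - v * q * (y - z) ^ 2 := by ring
    rw [h1, he, hc]
    ring

lemma sum_dvd {m : ℕ} (G : ZP m) (D : ℕ) (p : ℤ) (T : Finset (Fin m → ℤ))
    (w : (Fin m → ℤ) → ℤ)
    (hw : ∀ α : Fin m →₀ ℕ, α.degree ≤ D → ∑ s ∈ T, w s * ∏ i, s i ^ α i = 0) :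
    p ^ (D + 1) ∣ ∑ s ∈ T, w s * eval (p • s) G := by
  simp_rw [MvPolynomial.eval_eq', Finset.mul_sum]
  rw [Finset.sum_comm]
  refine Finset.dvd_sum fun α _ => ?_
  have : ∀ s ∈ T, w s * (coeff α G * ∏ i, (p • s) i ^ α i) =
      coeff α G * p ^ α.degree * (w s * ∏ i, s i ^ α i) := by
    intro s _
    simp only [Pi.smul_apply, smul_eq_mul, mul_pow, Finset.prod_mul_distrib]
    rw [Finset.prod_pow_eq_pow_sum, Finsupp.degree_eq_sum]
    ring
  rw [Finset.sum_congr rfl this, ← Finset.mul_sum]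
  by_cases h : α.degree ≤ D
  · simp [hw α h]
  · exact Dvd.dvd.mul_right (Dvd.dvd.mul_left (pow_dvd_pow p (by omega)) _) _

lemma growth {m : ℕ} (g : ZP m) (x₀ : Fin m → ℤ) :
    ∃ D : ℕ, ∀ s : Fin m → ℤ, ∃ B : ℕ, ∀ p : ℕ, 1 ≤ p →
      |eval (x₀ + (p : ℤ) • s) g| ≤ B * p ^ D := by
  induction g using MvPolynomial.induction_on with
  | C a => exact ⟨0, fun s => ⟨a.natAbs, fun p _ => by simp⟩⟩
  | add f g hf hg =>
    obtain ⟨D, hD⟩ := hf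
    obtain ⟨E, hE⟩ := hg
    refine ⟨D + E, fun s => ?_⟩
    obtain ⟨B, hB⟩ := hD s
    obtain ⟨B', hB'⟩ := hE s
    refine ⟨B + B', fun p hp => ?_⟩
    have h1 := hB p hp
    have h2 := hB' p hp
    have hp' : (1 : ℤ) ≤ p := by exact_mod_cast hp
    have h3 : (p : ℤ) ^ D ≤ p ^ (D + E) := pow_le_pow_right₀ hp' (by omega)
    have h4 : (p : ℤ) ^ E ≤ p ^ (D + E) := pow_le_pow_right₀ hp' (by omega)
    rw [map_add]
    refine (abs_add_le _ _).trans ?_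
    push_cast
    have h5 := mul_le_mul_of_nonneg_left h3 (Int.natCast_nonneg B)
    have h6 := mul_le_mul_of_nonneg_left h4 (Int.natCast_nonneg B')
    linarith
  | mul_X f i hf =>
    obtain ⟨D, hD⟩ := hf
    refine ⟨D + 1, fun s => ?_⟩
    obtain ⟨B, hB⟩ := hD s
    refine ⟨B * ((x₀ i).natAbs + (s i).natAbs), fun p hp => ?_⟩
    have h1 := hB p hp
    have hp' : (1 : ℤ) ≤ p := by exact_mod_cast hp
    rw [map_mul, abs_mul, eval_X]
    have h2 : |(x₀ + (p : ℤ) • s) i| ≤ (|x₀ i| + |s i|) * p := by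
      simp only [Pi.add_apply, Pi.smul_apply, smul_eq_mul]
      refine (abs_add_le _ _).trans ?_
      rw [abs_mul, Nat.abs_cast]
      nlinarith [abs_nonneg (x₀ i)]
    calc _ ≤ (B * p ^ D : ℤ) * ((|x₀ i| + |s i|) * p) :=
          mul_le_mul h1 h2 (abs_nonneg _) (by positivity)
      _ = _ := by push_cast; ring

lemma root_bound (g : Polynomial ℤ) (hg : g.Monic) (z : ℤ) (hz : g.eval z = 0) :
    |z| ≤ ∑ i ∈ Finset.range g.natDegree, |g.coeff i| := by
  by_cases h0 : z = 0
  · subst h0; simp; positivity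
  have h1 : (1 : ℤ) ≤ |z| := Int.one_le_abs h0
  rcases Nat.eq_zero_or_pos g.natDegree with hd | hd
  · rw [hg.natDegree_eq_zero.mp hd] at hz; simp at hz
  rw [Polynomial.eval_eq_sum_range, Finset.sum_range_succ, hg.coeff_natDegree, one_mul] at hz
  have h2 : |z| ^ g.natDegree ≤
      (∑ i ∈ Finset.range g.natDegree, |g.coeff i|) * |z| ^ (g.natDegree - 1) := by
    rw [← abs_pow, eq_neg_of_add_eq_zero_right hz, abs_neg, Finset.sum_mul]
    refine (Finset.abs_sum_le_sum_abs _ _).trans (Finset.sum_le_sum fun i hi => ?_)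
    rw [abs_mul, abs_pow]
    rw [Finset.mem_range] at hi
    exact mul_le_mul_of_nonneg_left (pow_le_pow_right₀ h1 (by omega)) (abs_nonneg _)
  obtain ⟨d, hd'⟩ : ∃ d, g.natDegree = d + 1 := ⟨g.natDegree - 1, by omega⟩
  rw [hd'] at h2 ⊢
  rw [pow_succ, mul_comm, Nat.add_sub_cancel] at h2
  exact le_of_mul_le_mul_right h2 (by positivity)

lemma root_growth {m : ℕ} (F : Polynomial (ZP m)) (hF : F.Monic) (x₀ : Fin m → ℤ) :
    ∃ D : ℕ, ∀ s : Fin m → ℤ, ∃ B : ℕ, ∀ p : ℕ, 1 ≤ p → ∀ z : ℤ,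
      (F.map (eval (x₀ + (p : ℤ) • s))).eval z = 0 → |z| ≤ B * p ^ D := by
  choose D hD using fun i => growth (F.coeff i) x₀
  choose B hB using hD
  refine ⟨∑ i ∈ Finset.range F.natDegree, D i, fun s =>
    ⟨∑ i ∈ Finset.range F.natDegree, B i s, fun p hp z hz => ?_⟩⟩
  have := root_bound _ (hF.map _) z hz
  rw [hF.natDegree_map] at this
  refine this.trans ?_
  push_cast
  rw [Finset.sum_mul]
  refine Finset.sum_le_sum fun i hi => ?_
  rw [Polynomial.coeff_map]
  refine (hB i s p hp).trans ?_
  have hp' : (1 : ℤ) ≤ p := by exact_mod_cast hp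
  exact mul_le_mul_of_nonneg_left (pow_le_pow_right₀ hp'
    (Finset.single_le_sum (f := D) (fun _ _ => Nat.zero_le _) hi)) (by positivity)

lemma interp {m : ℕ} (D : ℕ) (T : Finset (Fin m → ℤ)) :
    ∃ B : ℕ, ∀ z : (Fin m → ℤ) → ℤ,
      (∀ w : (Fin m → ℤ) → ℤ, (∀ s ∈ T, |w s| ≤ B) →
        (∀ α : Fin m →₀ ℕ, α.degree ≤ D → ∑ s ∈ T, w s * ∏ i, s i ^ α i = 0) →
        ∑ s ∈ T, w s * z s = 0) →
      ∃ R : MvPolynomial (Fin m) ℚ, R.totalDegree ≤ D ∧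
        ∀ s ∈ T, eval (fun i => (s i : ℚ)) R = z s := by
  classical
  let ev : MvPolynomial (Fin m) ℚ →ₗ[ℚ] (T → ℚ) :=
    LinearMap.pi fun s => (aeval (fun i => (s.1 i : ℚ)) : MvPolynomial (Fin m) ℚ →ₐ[ℚ] ℚ).toLinearMap
  let V := (restrictTotalDegree (Fin m) ℚ D).map ev
  let b := Module.finBasis ℚ ((T → ℚ) ⧸ V)
  let c : Fin (Module.finrank ℚ ((T → ℚ) ⧸ V)) × T → ℚ := fun js =>
    b.repr (V.mkQ (Pi.single js.2 1)) js.1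
  obtain ⟨⟨N, hN⟩, hN'⟩ := IsLocalization.exist_integer_multiples_of_finite (nonZeroDivisors ℤ) c
  choose w hw using hN'
  have hN0 : (N : ℚ) ≠ 0 := by
    exact_mod_cast nonZeroDivisors.ne_zero hN
  -- the functional attached to `w j`
  have key : ∀ j (y : T → ℚ), ∑ s : T, (w (j, s) : ℚ) * y s = N * b.repr (V.mkQ y) j := by
    intro j y
    have hy : y = ∑ s, y s • (Pi.single s 1 : T → ℚ) := by
      ext t; simp [Finset.sum_apply, Pi.single_apply]
    conv_rhs => rw [hy]
    simp only [map_sum, map_smul, Finsupp.coe_finsetSum, Finset.sum_apply, Finsupp.coe_smul, Pi.smul_apply, Finset.mul_sum]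
    refine Finset.sum_congr rfl fun s _ => ?_
    have := hw (j, s)
    simp only [algebraMap_int_eq, eq_intCast, c, zsmul_eq_mul] at this
    rw [this, smul_eq_mul]; ring
  refine ⟨∑ js, (w js).natAbs, fun z hz => ?_⟩
  have hmem : (fun s : T => (z s.1 : ℚ)) ∈ V := by
    rw [← Submodule.Quotient.mk_eq_zero, ← Submodule.mkQ_apply, ← b.repr.map_eq_zero_iff]
    ext j
    have h1 := hz (fun s => if h : s ∈ T then w (j, ⟨s, h⟩) else 0) ?_ ?_
    · rw [← Finset.sum_coe_sort] at h1
      simp only [Finset.coe_mem, dite_true, Subtype.coe_eta] at h1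
      have h2 := key j (fun s : T => (z s.1 : ℚ))
      have h3 : ∑ s : T, (w (j, s) : ℚ) * (z s.1 : ℚ) = 0 := by exact_mod_cast h1
      rw [h3] at h2
      simpa [hN0] using h2.symm
    · intro s hs
      simp only [hs, dite_true]
      push_cast
      exact Finset.single_le_sum (f := fun js => |w js|) (fun _ _ => abs_nonneg _)
        (Finset.mem_univ (j, (⟨s, hs⟩ : T)))
    · intro α hα
      rw [← Finset.sum_coe_sort]
      simp only [Finset.coe_mem, dite_true, Subtype.coe_eta]
      have h2 := key j (ev (monomial α 1))
      have h4 : V.mkQ (ev (monomial α 1)) = 0 := by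
        rw [Submodule.mkQ_apply, Submodule.Quotient.mk_eq_zero]
        refine Submodule.mem_map_of_mem ?_
        rw [mem_restrictTotalDegree]
        refine (totalDegree_monomial_le _ _).trans ?_
        exact hα
      rw [h4] at h2
      simp [ev, aeval_monomial, Finsupp.prod_fintype] at h2
      exact_mod_cast h2
  obtain ⟨R, hR, hR'⟩ := hmem
  refine ⟨R, (mem_restrictTotalDegree _ _ _).mp hR, fun s hs => ?_⟩
  have := congrFun hR' ⟨s, hs⟩
  simpa [ev, aeval_eq_eval] using this

lemma deg_bound1 {m : ℕ} {R S : Type*} [CommRing R] [CommRing S] (φ : R →+* S) (g : MvPolynomial (Fin m) R) :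
    ∃ E : ℕ, ∀ l : Fin m → MvPolynomial (Fin m) S, (∀ i, (l i).totalDegree ≤ 1) →
      (eval₂Hom ((C : S →+* MvPolynomial (Fin m) S).comp φ) l g).totalDegree ≤ E := by
  induction g using MvPolynomial.induction_on with
  | C a => exact ⟨0, fun l _ => by simp⟩
  | add f g hf hg =>
    obtain ⟨D, hD⟩ := hf
    obtain ⟨E, hE⟩ := hg
    refine ⟨D + E, fun l hl => ?_⟩
    rw [map_add]
    have h1 := hD l hl
    have h2 := hE l hl
    exact (totalDegree_add _ _).trans (max_le (by omega) (by omega))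
  | mul_X f i hf =>
    obtain ⟨D, hD⟩ := hf
    refine ⟨D + 1, fun l hl => ?_⟩
    rw [map_mul, eval₂Hom_X']
    exact (totalDegree_mul _ _).trans (add_le_add (hD l hl) (hl i))

lemma deg_bound2 {m : ℕ} (F : Polynomial (ZP m)) (D : ℕ) :
    ∃ E : ℕ, ∀ l : Fin m → MvPolynomial (Fin m) ℚ, (∀ i, (l i).totalDegree ≤ 1) →
      ∀ R : MvPolynomial (Fin m) ℚ, R.totalDegree ≤ D →
      (F.eval₂ (eval₂Hom ((C : ℚ →+* MvPolynomial (Fin m) ℚ).comp (Int.castRingHom ℚ)) l)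
        R).totalDegree ≤ E := by
  induction F using Polynomial.induction_on' with
  | add f g hf hg =>
    obtain ⟨D, hD⟩ := hf
    obtain ⟨E, hE⟩ := hg
    refine ⟨D + E, fun l hl R hR => ?_⟩
    rw [Polynomial.eval₂_add]
    have h1 := hD l hl R hR
    have h2 := hE l hl R hR
    exact (totalDegree_add _ _).trans (max_le (by omega) (by omega))
  | monomial n a =>
    obtain ⟨E, hE⟩ := deg_bound1 (Int.castRingHom ℚ) a
    refine ⟨E + n * D, fun l hl R hR => ?_⟩
    rw [Polynomial.eval₂_monomial]
    refine (totalDegree_mul _ _).trans (add_le_add (hE l hl) ?_)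
    exact (totalDegree_pow _ _).trans (Nat.mul_le_mul_left _ hR)

lemma lin_deg {m : ℕ} {R : Type*} [CommRing R] [Nontrivial R] (a b : R) (i : Fin m) :
    (C a + C b * X i : MvPolynomial (Fin m) R).totalDegree ≤ 1 := by
  refine (totalDegree_add _ _).trans (max_le (by rw [totalDegree_C]; omega) ?_)
  refine (totalDegree_mul _ _).trans ?_
  rw [totalDegree_C, totalDegree_X]

lemma deg_map_le {m : ℕ} {R S : Type*} [CommRing R] [CommRing S] (φ : R →+* S)
    (g : MvPolynomial (Fin m) R) : (MvPolynomial.map φ g).totalDegree ≤ g.totalDegree :=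
  Finset.sup_mono (support_map_subset _ _)

lemma main {m : ℕ} (F : Polynomial (ZP m)) (hF : F.Monic) (δ : ZP m) (hδ : δ ≠ 0)
    (a b : Polynomial (ZP m)) (hab : a * F + b * F.derivative = Polynomial.C δ)
    (h : MvPolynomial (Fin m) ℂ) (hh : h ≠ 0)
    (H : ∀ x : Fin m → ℤ, eval (fun i => (x i : ℂ)) h ≠ 0 →
      ∃ z : ℤ, (F.map (eval x)).eval z = 0) :
    ∃ R : MvPolynomial (Fin m) ℚ, F.eval₂ (MvPolynomial.map (Int.castRingHom ℚ)) R = 0 := by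
  classical
  obtain ⟨x₀, hx₀⟩ : ∃ x₀ : Fin m → ℤ, eval x₀ δ ≠ 0 := by
    by_contra! hc
    exact hδ (MvPolynomial.funext fun x => by simp [hc x])
  obtain ⟨D, hD⟩ := root_growth F hF x₀
  choose Bg hBg using hD
  choose Bi hBi using interp (m := m) D
  obtain ⟨E, hE⟩ := deg_bound2 F D
  obtain ⟨Eh, hEh⟩ := deg_bound1 (RingHom.id ℂ) h
  set d := F.natDegree with hd
  set K := d * E + Eh + 1 with hK
  set grid : Finset (Fin m → ℤ) :=
    Fintype.piFinset fun _ => (Finset.range K).image (Nat.cast : ℕ → ℤ) with hgrid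
  set Bm := ∑ T ∈ grid.powerset, Bi T with hBm
  set Bn := ∑ s ∈ grid, Bg s with hBn
  obtain ⟨p, hple, hp⟩ := Nat.exists_infinite_primes
    ((eval x₀ δ).natAbs + grid.card * Bm * Bn + 1)
  have : Fact p.Prime := ⟨hp⟩
  have hp1 : 1 ≤ p := hp.one_le
  set φ : ZP m →+* ZMod p := (Int.castRingHom (ZMod p)).comp (eval x₀) with hφ
  have hφδ : φ δ ≠ 0 := by
    simp only [hφ, RingHom.comp_apply, eq_intCast]
    rw [Ne, ZMod.intCast_zmod_eq_zero_iff_dvd]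
    intro hdvd
    have := Int.natAbs_dvd_natAbs.mpr hdvd
    have h2 := Nat.le_of_dvd (Int.natAbs_pos.mpr hx₀) this
    simp at h2
    omega
  have H' : ∀ s : Fin m → ℤ, ∃ z : ℤ,
      eval (fun i => ((x₀ + (p : ℤ) • s) i : ℂ)) h ≠ 0 →
        (F.map (eval (x₀ + (p : ℤ) • s))).eval z = 0 := by
    intro s
    by_cases hs : eval (fun i => ((x₀ + (p : ℤ) • s) i : ℂ)) h ≠ 0
    · obtain ⟨z, hz⟩ := H _ hs
      exact ⟨z, fun _ => hz⟩
    · exact ⟨0, fun h => absurd h hs⟩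
  choose z hz using H'
  set T : ZMod p → Finset (Fin m → ℤ) := fun c => grid.filter fun s =>
    eval (fun i => ((x₀ + (p : ℤ) • s) i : ℂ)) h ≠ 0 ∧ (z s : ZMod p) = c with hT
  have hR : ∀ c : ZMod p, ∃ R : MvPolynomial (Fin m) ℚ, R.totalDegree ≤ D ∧
      ∀ s ∈ T c, eval (fun i => (s i : ℚ)) R = z s := by
    intro c
    refine hBi (T c) z fun w hw hw' => ?_
    rcases (T c).eq_empty_or_nonempty with hem | ⟨s₁, hs₁⟩
    · simp [hem]
    have hTz : ∀ s ∈ T c, (F.map (eval (x₀ + (p : ℤ) • s))).eval (z s) = 0 ∧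
        (z s : ZMod p) = c ∧ s ∈ grid := by
      intro s hs
      simp only [hT, Finset.mem_filter] at hs
      exact ⟨hz s hs.2.1, hs.2.2, hs.1⟩
    have hFc : (F.map φ).eval c = 0 := by
      have h1 := red p F x₀ s₁ (z s₁)
      rw [(hTz s₁ hs₁).1, (hTz s₁ hs₁).2.1] at h1
      rw [hφ, ← h1, Int.cast_zero]
    have hbez : (b.map φ).eval c * (F.derivative.map φ).eval c = φ δ := by
      have := congrArg (fun q => (q.map φ).eval c) hab
      simpa [hFc] using this
    obtain ⟨v, hv⟩ := ZMod.intCast_surjective ((b.map φ).eval c / φ δ)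
    have happ : ∀ s ∈ T c, (p : ℤ) ^ (D + 1) ∣
        eval ((p : ℤ) • s) (newton F x₀ (z s₁) v D) - z s := by
      intro s hs
      obtain ⟨e1, e2, -⟩ := hTz s hs
      apply newton_approx _ _ _ _ _ _ _ e1
      · rw [← ZMod.intCast_zmod_eq_zero_iff_dvd]
        push_cast
        rw [e2, (hTz s₁ hs₁).2.1, sub_self]
      · rw [← ZMod.intCast_zmod_eq_zero_iff_dvd, Polynomial.derivative_map]
        push_cast
        rw [red, e2, hv, ← hφ, div_mul_eq_mul_div, hbez, div_self hφδ, sub_self]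
    have hs1 := sum_dvd (newton F x₀ (z s₁) v D) D p (T c) w hw'
    have hs2 : (p : ℤ) ^ (D + 1) ∣ ∑ s ∈ T c, w s *
        (eval ((p : ℤ) • s) (newton F x₀ (z s₁) v D) - z s) :=
      Finset.dvd_sum fun s hs => (happ s hs).mul_left _
    have hs3 : (p : ℤ) ^ (D + 1) ∣ ∑ s ∈ T c, w s * z s := by
      have := dvd_sub hs1 hs2
      simpa [mul_sub, Finset.sum_sub_distrib] using this
    refine Int.eq_zero_of_abs_lt_dvd hs3 ?_
    have hTg : T c ⊆ grid := Finset.filter_subset _ _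
    have hb1 : (Bi (T c) : ℤ) ≤ Bm := by
      exact_mod_cast Finset.single_le_sum (f := Bi) (fun _ _ => Nat.zero_le _)
        (Finset.mem_powerset.mpr hTg)
    have hterm : ∀ s ∈ T c, |w s * z s| ≤ (Bm : ℤ) * (Bn * p ^ D) := by
      intro s hs
      obtain ⟨e1, e2, e3⟩ := hTz s hs
      rw [abs_mul]
      have hb2 : (Bg s : ℤ) ≤ Bn := by
        exact_mod_cast Finset.single_le_sum (f := Bg) (fun _ _ => Nat.zero_le _) e3
      refine mul_le_mul ((hw s hs).trans hb1) ((hBg s p hp1 _ e1).trans ?_) (abs_nonneg _)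
        (by positivity)
      exact mul_le_mul_of_nonneg_right hb2 (by positivity)
    have hcard : ((T c).card : ℤ) ≤ grid.card := by exact_mod_cast Finset.card_le_card hTg
    have hplt : (grid.card : ℤ) * Bm * Bn < p := by
      have : grid.card * Bm * Bn < p := by omega
      exact_mod_cast this
    calc |∑ s ∈ T c, w s * z s| ≤ ∑ s ∈ T c, |w s * z s| := Finset.abs_sum_le_sum_abs _ _
      _ ≤ (T c).card • ((Bm : ℤ) * (Bn * p ^ D)) := Finset.sum_le_card_nsmul _ _ _ hterm
      _ ≤ grid.card * ((Bm : ℤ) * (Bn * p ^ D)) := by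
          rw [nsmul_eq_mul]
          exact mul_le_mul_of_nonneg_right hcard (by positivity)
      _ = (grid.card * Bm * Bn) * p ^ D := by ring
      _ < p * p ^ D := mul_lt_mul_of_pos_right hplt (by positivity)
      _ = p ^ (D + 1) := by ring
  choose R hRdeg hReval using hR
  set l : Fin m → MvPolynomial (Fin m) ℚ := fun i => C (x₀ i : ℚ) + C (p : ℚ) * X i with hl
  set lc : Fin m → MvPolynomial (Fin m) ℂ := fun i => C (x₀ i : ℂ) + C (p : ℂ) * X i with hlc
  have hl1 : ∀ i, (l i).totalDegree ≤ 1 := fun i => lin_deg _ _ _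
  have hlc1 : ∀ i, (lc i).totalDegree ≤ 1 := fun i => lin_deg _ _ _
  set Φ : ZP m →+* MvPolynomial (Fin m) ℚ :=
    eval₂Hom ((C : ℚ →+* MvPolynomial (Fin m) ℚ).comp (Int.castRingHom ℚ)) l with hΦ
  set hc := eval₂Hom ((C : ℂ →+* MvPolynomial (Fin m) ℂ).comp (RingHom.id ℂ)) lc h with hhc
  have hp0 : (p : ℂ) ≠ 0 := by exact_mod_cast hp.ne_zero
  have hceval : ∀ y : Fin m → ℂ, eval y hc = eval (fun i => (x₀ i : ℂ) + p * y i) h := by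
    intro y
    have : (eval y).comp (eval₂Hom ((C : ℂ →+* MvPolynomial (Fin m) ℂ).comp (RingHom.id ℂ)) lc)
        = eval (fun i => (x₀ i : ℂ) + p * y i) := by
      apply MvPolynomial.ringHom_ext <;> intros <;> simp [hlc]
    rw [← this]; rfl
  have hc0 : hc ≠ 0 := by
    intro h0
    apply hh
    refine MvPolynomial.funext fun y => ?_
    have := hceval (fun i => (y i - x₀ i) / p)
    rw [h0] at this
    have h2 : (fun i => (x₀ i : ℂ) + p * ((y i - x₀ i) / p)) = y := by
      ext i; field_simp; ring
    rw [h2] at this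
    simpa using this.symm
  set rts := (F.map φ).roots.toFinset with hrts
  set Q := (∏ c ∈ rts, MvPolynomial.map (algebraMap ℚ ℂ) (F.eval₂ Φ (R c))) * hc with hQ
  have hrcard : rts.card ≤ d := by
    refine (Multiset.toFinset_card_le _).trans ((Polynomial.card_roots' _).trans ?_)
    exact Polynomial.natDegree_map_le
  have hQdeg : Q.totalDegree < K := by
    have h1 : Q.totalDegree ≤ d * E + Eh := by
      refine (totalDegree_mul _ _).trans (add_le_add ?_ (hEh lc hlc1))
      refine (totalDegree_finsetProd _ _).trans ?_
      refine (Finset.sum_le_card_nsmul _ _ E fun c _ => ?_).trans ?_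
      · exact (deg_map_le _ _).trans (hE l hl1 _ (hRdeg c))
      · rw [smul_eq_mul]; exact Nat.mul_le_mul_right _ hrcard
    omega
  have hQ0 : Q = 0 := by
    apply eq_zero_of_eval_zero_at_prod_finset Q
      (fun _ => (Finset.range K).image (Nat.cast : ℕ → ℂ))
    · intro i
      rw [Finset.card_image_of_injective _ Nat.cast_injective, Finset.card_range]
      exact (degreeOf_le_totalDegree _ _).trans_lt hQdeg
    · intro x hx
      simp only [Finset.mem_image, Finset.mem_range] at hx
      choose n hn hnx using hx
      set s : Fin m → ℤ := fun i => (n i : ℤ) with hs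
      have hsg : s ∈ grid := by
        simp only [hgrid, Fintype.mem_piFinset, Finset.mem_image, Finset.mem_range]
        exact fun i => ⟨n i, hn i, rfl⟩
      have hxs : (fun i => (x₀ i : ℂ) + p * x i) = fun i => ((x₀ + (p : ℤ) • s) i : ℂ) := by
        ext i; simp [hs, ← hnx i]
      rw [hQ, map_mul, hceval, hxs, map_prod]
      by_cases hg : eval (fun i => ((x₀ + (p : ℤ) • s) i : ℂ)) h = 0
      · rw [hg, mul_zero]
      have hzs := hz s hg
      have hmem : (z s : ZMod p) ∈ rts := by
        rw [hrts, Multiset.mem_toFinset, Polynomial.mem_roots (hF.map φ).ne_zero,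
          Polynomial.IsRoot.def]
        have h1 := red p F x₀ s (z s)
        rw [hzs] at h1
        rw [hφ, ← h1, Int.cast_zero]
      rw [Finset.prod_eq_zero hmem, zero_mul]
      have hsT : s ∈ T (z s : ZMod p) := by
        simp only [hT, Finset.mem_filter]
        exact ⟨hsg, hg, trivial⟩
      have hev := hReval _ s hsT
      have hx2 : x = (algebraMap ℚ ℂ) ∘ (fun i => (s i : ℚ)) := by
        ext i; simp [hs, ← hnx i]
      have hcomp : (eval (fun i => (s i : ℚ))).comp Φ =
          (Int.castRingHom ℚ).comp (eval (x₀ + (p : ℤ) • s)) := by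
        apply MvPolynomial.ringHom_ext <;> intros <;> simp [hΦ, hl]
      rw [hx2, eval_map, ← eval₂_comp, Polynomial.hom_eval₂, hcomp, hev]
      have : F.eval₂ ((Int.castRingHom ℚ).comp (eval (x₀ + (p : ℤ) • s))) (z s : ℚ) = 0 := by
        rw [← eq_intCast (Int.castRingHom ℚ), ← Polynomial.hom_eval₂, ← Polynomial.eval_map,
          hzs, map_zero]
      rw [this, map_zero]
  obtain ⟨c, -, hc'⟩ : ∃ c ∈ rts, MvPolynomial.map (algebraMap ℚ ℂ) (F.eval₂ Φ (R c)) = 0 := by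
    rcases mul_eq_zero.mp hQ0 with h1 | h1
    · exact Finset.prod_eq_zero_iff.mp h1
    · exact absurd h1 hc0
  have hroot : F.eval₂ Φ (R c) = 0 :=
    (MvPolynomial.map_injective _ (algebraMap ℚ ℂ).injective) (by rw [hc', map_zero])
  have hpq : (p : ℚ) ≠ 0 := by exact_mod_cast hp.ne_zero
  set Ψ : MvPolynomial (Fin m) ℚ →+* MvPolynomial (Fin m) ℚ :=
    (aeval fun i => C ((p : ℚ)⁻¹) * (X i - C (x₀ i : ℚ)) :
      MvPolynomial (Fin m) ℚ →ₐ[ℚ] MvPolynomial (Fin m) ℚ).toRingHom with hΨ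
  refine ⟨Ψ (R c), ?_⟩
  have hcomp : Ψ.comp Φ = MvPolynomial.map (Int.castRingHom ℚ) := by
    apply MvPolynomial.ringHom_ext
    · intro r; simp [hΨ, hΦ]
    · intro i
      have : (C (p : ℚ) : MvPolynomial (Fin m) ℚ) * C ((p : ℚ)⁻¹) = 1 := by
        rw [← C_mul, mul_inv_cancel₀ hpq, C_1]
      simp only [hΨ, hΦ, hl, RingHom.comp_apply, coe_eval₂Hom, eval₂_X, map_add, map_mul,
        AlgHom.toRingHom_eq_coe, RingHom.coe_coe, algHom_C, algebraMap_eq, aeval_X, map_X]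
      rw [← mul_assoc, this]; ring
  rw [← hcomp, ← Polynomial.hom_eval₂, hroot, map_zero]

lemma clear1 {m : ℕ} (q : MvPolynomial (Fin m) ℚ) :
    ∃ N : ℕ, N ≠ 0 ∧ ∃ a : ZP m, MvPolynomial.map (Int.castRingHom ℚ) a = C (N : ℚ) * q := by
  induction q using MvPolynomial.induction_on with
  | C a =>
    refine ⟨a.den, a.den_nz, C a.num, ?_⟩
    rw [map_C, ← C_mul, Rat.den_mul_eq_num, eq_intCast]
  | add f g hf hg =>
    obtain ⟨N, hN, a, ha⟩ := hf
    obtain ⟨M, hM, b, hb⟩ := hg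
    refine ⟨N * M, mul_ne_zero hN hM, C (M : ℤ) * a + C (N : ℤ) * b, ?_⟩
    rw [map_add, map_mul, map_mul, ha, hb, map_C, map_C]
    simp only [Nat.cast_mul, C_mul, eq_intCast, Int.cast_natCast]
    ring
  | mul_X f i hf =>
    obtain ⟨N, hN, a, ha⟩ := hf
    exact ⟨N, hN, a * X i, by rw [map_mul, ha, map_X, mul_assoc]⟩

lemma clear2 {m : ℕ} (g : Polynomial (MvPolynomial (Fin m) ℚ)) :
    ∃ N : ℕ, N ≠ 0 ∧ ∃ a : Polynomial (ZP m),
      a.map (MvPolynomial.map (Int.castRingHom ℚ)) = Polynomial.C (C (N : ℚ)) * g := by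
  induction g using Polynomial.induction_on' with
  | add f g hf hg =>
    obtain ⟨N, hN, a, ha⟩ := hf
    obtain ⟨M, hM, b, hb⟩ := hg
    refine ⟨N * M, mul_ne_zero hN hM,
      Polynomial.C (C (M : ℤ)) * a + Polynomial.C (C (N : ℤ)) * b, ?_⟩
    rw [Polynomial.map_add, Polynomial.map_mul, Polynomial.map_mul, ha, hb, Polynomial.map_C,
      Polynomial.map_C, map_C, map_C]
    simp only [Nat.cast_mul, C_mul, eq_intCast, Int.cast_natCast, Polynomial.C_mul]
    ring
  | monomial n q =>
    obtain ⟨N, hN, a, ha⟩ := clear1 q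
    refine ⟨N, hN, Polynomial.monomial n a, ?_⟩
    rw [Polynomial.map_monomial, ha, Polynomial.C_mul_monomial]

lemma irred_normalization {L : Type*} [Field L] (q : Polynomial L) (hq : Irreducible q) :
    Irreducible q.integralNormalization := by
  have hd : 1 ≤ q.natDegree := hq.natDegree_pos
  have hc : q.leadingCoeff ≠ 0 := Polynomial.leadingCoeff_ne_zero.mpr hq.ne_zero
  let _ := invertibleOfNonzero hc
  have h1 := Polynomial.integralNormalization_eval₂_leadingCoeff_mul hd
    (Polynomial.C : L →+* Polynomial L) Polynomial.X
  rw [Polynomial.eval₂_C_X] at h1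
  rw [← MulEquiv.irreducible_iff (Polynomial.algEquivCMulXAddC q.leadingCoeff 0)]
  have h2 : Polynomial.algEquivCMulXAddC q.leadingCoeff 0 q.integralNormalization =
      Polynomial.C q.leadingCoeff ^ (q.natDegree - 1) * q := by
    rw [← h1]
    simp [Polynomial.algEquivCMulXAddC, Polynomial.aeval_def]
  rw [h2]
  refine (irreducible_isUnit_mul ?_).mpr hq
  exact (Polynomial.isUnit_C.mpr hc.isUnit).pow _

end HIT

open HIT in
/-- Hilbert irreducibility consequence: let `n = m + 1 ≥ 2` and let
`f ∈ ℚ[x₁,…,xₙ]` be irreducible over `ℚ`. If there is a proper Zariski closed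
subset `W ⊊ ℂ^{n-1}` such that for every rational point `ρ ∈ ℚ^{n-1}` outside `W`
the polynomial `f(ρ, xₙ)` has a rational root, then `f` has degree at most `1`
in the last variable `xₙ`. -/
theorem degree_le_one_of_rational_roots (m : ℕ) (hm : 1 ≤ m)
    (f : MvPolynomial (Fin (m + 1)) ℚ) (hf : Irreducible f)
    (W : Set (Fin m → ℂ)) (hW : ZClosed m W) (hWproper : W ≠ Set.univ)
    (h : ∀ ρ : Fin m → ℚ, (fun i => (ρ i : ℂ)) ∉ W →
      ∃ t : ℚ, eval (Fin.snoc ρ t) f = 0) :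
    f.degreeOf (Fin.last m) ≤ 1 := by
  by_contra! hdeg
  -- the polynomial in the last variable
  set g := finSuccEquiv ℚ m (renameEquiv ℚ (finRotate (m + 1)) f) with hg
  have hgirr : Irreducible g := by
    rw [hg, MulEquiv.irreducible_iff, MulEquiv.irreducible_iff]
    exact hf
  have hgdeg : g.natDegree = f.degreeOf (Fin.last m) := by
    rw [hg, natDegree_finSuccEquiv, renameEquiv_apply, ← finRotate_last (n := m),
      degreeOf_rename_of_injective (finRotate (m + 1)).injective]
  have hgeval : ∀ (ρ : Fin m → ℚ) (t : ℚ),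
      (g.map (eval ρ)).eval t = eval (Fin.snoc ρ t : Fin (m + 1) → ℚ) f := by
    intro ρ t
    rw [hg, ← eval_eq_eval_mv_eval', renameEquiv_apply, eval_rename, Fin.snoc_eq_cons_rotate]
    rfl
  obtain ⟨N, hN, g₁, hg₁⟩ := clear2 g
  set κ : ZP m →+* MvPolynomial (Fin m) ℚ := MvPolynomial.map (Int.castRingHom ℚ) with hκ
  have hκinj : Function.Injective κ := map_injective _ Int.cast_injective
  set L := FractionRing (MvPolynomial (Fin m) ℚ)
  set j : MvPolynomial (Fin m) ℚ →+* L := algebraMap _ _ with hj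
  have hjinj : Function.Injective j := IsFractionRing.injective _ _
  have hinj : Function.Injective (j.comp κ) := hjinj.comp hκinj
  have hNQ : (N : ℚ) ≠ 0 := by exact_mod_cast hN
  have hgL : Irreducible (g.map j) :=
    ((hgirr.isPrimitive (by omega)).irreducible_iff_irreducible_map_fraction_map).mp hgirr
  have hg₁L : Irreducible (g₁.map (j.comp κ)) := by
    rw [← Polynomial.map_map, hg₁, Polynomial.map_mul, Polynomial.map_C]
    refine (irreducible_isUnit_mul ?_).mpr hgL
    refine Polynomial.isUnit_C.mpr (IsUnit.map j ?_)
    exact (IsUnit.mk0 _ hNQ).map C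
  have hg₁0 : g₁ ≠ 0 := by
    rintro rfl
    simp at hg₁L
  have hg₁deg : g₁.natDegree = g.natDegree := by
    rw [← Polynomial.natDegree_map_eq_of_injective hκinj, hg₁,
      Polynomial.natDegree_C_mul]
    exact (C_ne_zero).mpr hNQ
  set F := g₁.integralNormalization with hF
  have hFm : F.Monic := Polynomial.monic_integralNormalization hg₁0
  have hFL : Irreducible (F.map (j.comp κ)) := by
    rw [hF, ← Polynomial.integralNormalization_map]
    · exact irred_normalization _ hg₁L
    · rw [Ne, map_eq_zero_iff _ hinj]
      exact Polynomial.leadingCoeff_ne_zero.mpr hg₁0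
  have hFdeg : F.natDegree = g.natDegree := by
    rw [hF, Polynomial.natDegree_eq_of_degree_eq g₁.degree_integralNormalization, hg₁deg]
  have hsep : IsCoprime (F.map (j.comp κ)) (F.map (j.comp κ)).derivative := hFL.separable
  set δ := Polynomial.resultant F F.derivative with hδ
  have hδ0 : δ ≠ 0 := by
    have h1 := Polynomial.resultant_ne_zero _ _ hsep
    rw [Polynomial.derivative_map, Polynomial.natDegree_map_eq_of_injective hinj,
      Polynomial.natDegree_map_eq_of_injective hinj, Polynomial.resultant_map_map] at h1
    intro h0
    rw [← hδ, h0, map_zero] at h1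
    exact h1 rfl
  obtain ⟨a, b, -, -, hab⟩ := Polynomial.exists_mul_add_mul_eq_C_resultant F F.derivative le_rfl le_rfl (by omega)
  -- a polynomial vanishing on `W`
  obtain ⟨P, hP⟩ := hW
  obtain ⟨q, hqP, hq0⟩ : ∃ q ∈ P, q ≠ 0 := by
    by_contra! hc
    apply hWproper
    rw [hP]
    ext y
    simp only [Set.mem_ofPred_eq, Set.mem_univ, iff_true]
    intro p hp
    rw [hc p hp, map_zero]
  obtain ⟨R, hR⟩ := main F hFm δ hδ0 a b (by rw [hδ, ← hab]; ring) q hq0 (by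
    intro x hx
    obtain ⟨t, ht⟩ := h (fun i => (x i : ℚ)) (by
      rw [hP]
      intro hmem
      apply hx
      simpa using hmem q hqP)
    rw [← hgeval, Polynomial.eval_map] at ht
    have hcomp : (eval (fun i => (x i : ℚ))).comp κ = (Int.castRingHom ℚ).comp (eval x) := by
      apply MvPolynomial.ringHom_ext <;> intros <;> simp [hκ]
    have h1 : g₁.eval₂ ((Int.castRingHom ℚ).comp (eval x)) t = 0 := by
      rw [← hcomp, ← Polynomial.eval₂_map, hg₁, Polynomial.eval₂_mul, ht, mul_zero]
    have h2 := Polynomial.integralNormalization_eval₂_leadingCoeff_mul (p := g₁) (by omega)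
      ((Int.castRingHom ℚ).comp (eval x)) t
    rw [h1, mul_zero, ← hF, ← Polynomial.eval₂_map] at h2
    generalize ((Int.castRingHom ℚ).comp (eval x)) g₁.leadingCoeff * t = y at h2
    obtain ⟨z, hz⟩ := isInteger_of_is_root_of_monic (hFm.map (eval x)) (r := y)
      (by rw [Polynomial.aeval_def]; exact h2)
    refine ⟨z, ?_⟩
    rw [← hz] at h2
    have h3 : Int.castRingHom ℚ (((F.map (eval x)).eval z)) = 0 := by
      rw [← Polynomial.eval₂_hom]; exact h2
    simpa using h3)
  have hroot : (F.map (j.comp κ)).IsRoot (j R) := by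
    rw [Polynomial.IsRoot.def, Polynomial.eval_map, ← Polynomial.hom_eval₂, hR, map_zero]
  have h1 := Polynomial.degree_eq_one_of_irreducible_of_root hFL hroot
  have h2 := Polynomial.natDegree_eq_of_degree_eq_some h1
  rw [Polynomial.natDegree_map_eq_of_injective hinj] at h2
  have h3 : g.natDegree = 1 := hFdeg.symm.trans h2
  omega
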